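/- Let 𝒫 be defined on Schwartz functions on ℝ^{2d+1} by (𝒫f)(Y, s) := ½ ∫_{−∞}^{s} (f(Y, s') − f(Y, −s')) ds'. Then ∂_s (𝒫f)(Y, s) = ½(f(Y, s) − f(Y, −s)), and 𝒫f is again a Schwartz function. -/

import Mathlib

open MeasureTheory

variable {d : ℕ}

/-- The operator `𝒫 f (Y,s) = ½ ∫_{−∞}^{s} (f(Y,s') − f(Y,−s')) ds'`. -/
noncomputable def Pop (f : ((Fin (2 * d) → ℝ) × ℝ) → ℂ) :
    ((Fin (2 * d) → ℝ) × ℝ) → ℂ := fun w =>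
  (1 / 2 : ℂ) * ∫ s' in Set.Iic w.2, (f (w.1, s') - f (w.1, -s'))

section IntegralAlongSecondCoordinate

universe u

variable {E F : Type u} [NormedAddCommGroup E] [NormedSpace ℝ E]
  [NormedAddCommGroup F] [NormedSpace ℝ F]

theorem SchwartzMap.exists_pow_mul_one_add_sq_mul_norm_le (f : SchwartzMap (E × ℝ) F) (k : ℕ) :
    ∃ C, 0 ≤ C ∧ ∀ x, ‖x‖ ^ k * ((1 + ‖x‖ ^ 2) * ‖f x‖) ≤ C := by
  refine ⟨SchwartzMap.seminorm ℝ k 0 f + SchwartzMap.seminorm ℝ (k + 2) 0 f, by positivity,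
    fun x => ?_⟩
  have h₀ := f.norm_pow_mul_le_seminorm ℝ k x
  have h₂ := f.norm_pow_mul_le_seminorm ℝ (k + 2) x
  calc ‖x‖ ^ k * ((1 + ‖x‖ ^ 2) * ‖f x‖) = ‖x‖ ^ k * ‖f x‖ + ‖x‖ ^ (k + 2) * ‖f x‖ := by ring
    _ ≤ _ := add_le_add h₀ h₂

theorem SchwartzMap.exists_norm_translate_snd_le (f : SchwartzMap (E × ℝ) F) :
    ∃ C, 0 ≤ C ∧ ∀ (w : E × ℝ) (t : ℝ),
      ‖f (w + (0, t))‖ ≤ C * (1 + ‖w‖ ^ 2) * (1 + t ^ 2)⁻¹ := by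
  obtain ⟨C, hC, h⟩ := f.exists_pow_mul_one_add_sq_mul_norm_le 0
  refine ⟨2 * C, by positivity, fun w t => ?_⟩
  have hx := h (w + (0, t))
  set x := w + ((0 : E), t) with hxdef
  have hxw : t = x.2 - w.2 := by simp [hxdef]
  have h₁ : t ^ 2 ≤ 2 * ‖x‖ ^ 2 + 2 * ‖w‖ ^ 2 := by
    have hx₂ : x.2 ^ 2 ≤ ‖x‖ ^ 2 := sq_le_sq' (abs_le.1 (norm_snd_le x)).1
      (abs_le.1 (norm_snd_le x)).2
    have hw₂ : w.2 ^ 2 ≤ ‖w‖ ^ 2 := sq_le_sq' (abs_le.1 (norm_snd_le w)).1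
      (abs_le.1 (norm_snd_le w)).2
    rw [hxw]
    nlinarith [sq_nonneg (x.2 + w.2)]
  rw [← div_eq_mul_inv, le_div_iff₀ (by positivity)]
  have h₂ : 1 + t ^ 2 ≤ 2 * (1 + ‖w‖ ^ 2) * (1 + ‖x‖ ^ 2) := by
    nlinarith [mul_nonneg (sq_nonneg ‖w‖) (sq_nonneg ‖x‖)]
  rw [pow_zero, one_mul] at hx
  calc ‖f x‖ * (1 + t ^ 2) ≤ ‖f x‖ * (2 * (1 + ‖w‖ ^ 2) * (1 + ‖x‖ ^ 2)) := by gcongr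
    _ = 2 * (1 + ‖w‖ ^ 2) * ((1 + ‖x‖ ^ 2) * ‖f x‖) := by ring
    _ ≤ 2 * (1 + ‖w‖ ^ 2) * C := by gcongr
    _ = 2 * C * (1 + ‖w‖ ^ 2) := by ring

theorem SchwartzMap.continuous_translate_snd (f : SchwartzMap (E × ℝ) F) (w : E × ℝ) :
    Continuous fun t : ℝ => f (w + (0, t)) :=
  f.continuous.comp (by fun_prop)

theorem SchwartzMap.aestronglyMeasurable_translate_snd (f : SchwartzMap (E × ℝ) F) (w : E × ℝ)
    (μ : Measure ℝ) : AEStronglyMeasurable (fun t : ℝ => f (w + (0, t))) μ :=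
  (f.continuous_translate_snd w).aestronglyMeasurable

theorem SchwartzMap.integrable_translate_snd (f : SchwartzMap (E × ℝ) F) (w : E × ℝ) :
    Integrable fun t : ℝ => f (w + (0, t)) := by
  obtain ⟨C, -, h⟩ := f.exists_norm_translate_snd_le
  exact (integrable_inv_one_add_sq.const_mul (C * (1 + ‖w‖ ^ 2))).mono'
    (f.aestronglyMeasurable_translate_snd w _) (.of_forall fun t => h w t)

theorem SchwartzMap.hasFDerivAt_setIntegral_translate_snd (f : SchwartzMap (E × ℝ) F)
    (S : Set ℝ) (w : E × ℝ) :
    HasFDerivAt (fun w => ∫ t in S, f (w + (0, t)))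
      (∫ t in S, SchwartzMap.fderivCLM ℝ (E × ℝ) F f (w + (0, t))) w := by
  obtain ⟨C, hC, h⟩ := (SchwartzMap.fderivCLM ℝ (E × ℝ) F f).exists_norm_translate_snd_le
  refine hasFDerivAt_integral_of_dominated_of_fderiv_le
    (F' := fun w t => SchwartzMap.fderivCLM ℝ (E × ℝ) F f (w + (0, t)))
    (bound := fun t => C * (1 + (‖w‖ + 1) ^ 2) * (1 + t ^ 2)⁻¹)
    (Metric.ball_mem_nhds w one_pos)
    (.of_forall fun x => f.aestronglyMeasurable_translate_snd x _)
    (f.integrable_translate_snd w).integrableOn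
    (SchwartzMap.aestronglyMeasurable_translate_snd _ w _)
    (.of_forall fun t x hx => (h x t).trans ?_)
    (integrable_inv_one_add_sq.const_mul _).integrableOn
    (.of_forall fun t x _ => ?_)
  · have : ‖x‖ ≤ ‖w‖ + 1 := by
      have := norm_sub_norm_le x w
      rw [Metric.mem_ball, dist_eq_norm] at hx
      linarith
    gcongr
  · simpa [Function.comp_def] using (f.differentiableAt (x := x + (0, t))).hasFDerivAt.comp x
      ((hasFDerivAt_id x).add_const ((0 : E), t))

theorem SchwartzMap.integral_fderiv_translate_snd_eq_zero {f : SchwartzMap (E × ℝ) F}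
    (hf : ∀ w, ∫ t : ℝ, f (w + (0, t)) = 0) (w : E × ℝ) :
    ∫ t : ℝ, SchwartzMap.fderivCLM ℝ (E × ℝ) F f (w + (0, t)) = 0 := by
  have h := f.hasFDerivAt_setIntegral_translate_snd Set.univ w
  simp only [Measure.restrict_univ, hf] at h
  exact h.unique (hasFDerivAt_const 0 w)

theorem SchwartzMap.contDiff_setIntegral_translate_snd (f : SchwartzMap (E × ℝ) F)
    (S : Set ℝ) (n : ℕ) : ContDiff ℝ n fun w => ∫ t in S, f (w + (0, t)) := by
  induction n generalizing F with
  | zero =>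
    exact contDiff_zero.2 (continuous_iff_continuousAt.2 fun w =>
      (f.hasFDerivAt_setIntegral_translate_snd S w).continuousAt)
  | succ n ih =>
    exact contDiff_succ_iff_hasFDerivAt.2
      ⟨_, ih (SchwartzMap.fderivCLM ℝ (E × ℝ) F f), f.hasFDerivAt_setIntegral_translate_snd S⟩

theorem SchwartzMap.exists_pow_mul_norm_integral_Iic_translate_snd_le
    {f : SchwartzMap (E × ℝ) F} (hf : ∀ w, ∫ t : ℝ, f (w + (0, t)) = 0) (k : ℕ) :
    ∃ C, ∀ w : E × ℝ, ‖w‖ ^ k * ‖∫ t in Set.Iic (0 : ℝ), f (w + (0, t))‖ ≤ C := by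
  obtain ⟨C, hC, h⟩ := f.exists_pow_mul_one_add_sq_mul_norm_le k
  have key : ∀ (S : Set ℝ) (w : E × ℝ), MeasurableSet S → (∀ t ∈ S, 0 ≤ w.2 * t) →
      ‖w‖ ^ k * ‖∫ t in S, f (w + (0, t))‖ ≤ ∫ t : ℝ, C * (1 + t ^ 2)⁻¹ := by
    intro S w hS hwS
    have hint : Integrable fun t : ℝ => C * (1 + t ^ 2)⁻¹ :=
      integrable_inv_one_add_sq.const_mul C
    calc ‖w‖ ^ k * ‖∫ t in S, f (w + (0, t))‖
        = ‖∫ t in S, ‖w‖ ^ k • f (w + (0, t))‖ := by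
          rw [integral_smul, norm_smul, norm_pow, norm_norm]
      _ ≤ ∫ t in S, C * (1 + t ^ 2)⁻¹ := by
          refine norm_integral_le_of_norm_le hint.integrableOn
            ((ae_restrict_iff' hS).2 (.of_forall fun t ht => ?_))
          have hs : |w.2| ≤ |w.2 + t| ∧ |t| ≤ |w.2 + t| := by
            have := hwS t ht
            constructor <;> exact sq_le_sq.1 (by nlinarith [sq_nonneg t, sq_nonneg w.2])
          have hx := h (w + (0, t))
          have hsnd : |w.2 + t| ≤ ‖w + ((0 : E), t)‖ := norm_snd_le (w + ((0 : E), t))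
          have hfst : ‖w.1‖ ≤ ‖w + ((0 : E), t)‖ := by
            simpa using norm_fst_le (w + ((0 : E), t))
          have hw : ‖w‖ ≤ ‖w + ((0 : E), t)‖ := max_le hfst (hs.1.trans hsnd)
          have ht₂ : t ^ 2 ≤ ‖w + ((0 : E), t)‖ ^ 2 := by
            rw [← sq_abs]
            exact pow_le_pow_left₀ (abs_nonneg t) (hs.2.trans hsnd) 2
          rw [norm_smul, norm_pow, norm_norm, ← div_eq_mul_inv, le_div_iff₀ (by positivity)]
          refine le_trans ?_ hx
          rw [mul_assoc, mul_comm ‖f _‖]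
          gcongr
      _ ≤ ∫ t : ℝ, C * (1 + t ^ 2)⁻¹ :=
          setIntegral_le_integral hint (.of_forall fun t => by positivity)
  refine ⟨∫ t : ℝ, C * (1 + t ^ 2)⁻¹, fun w => ?_⟩
  rcases le_total w.2 0 with hw | hw
  · exact key (Set.Iic 0) w measurableSet_Iic fun t ht => mul_nonneg_of_nonpos_of_nonpos hw ht
  · have hsplit := intervalIntegral.integral_Iic_add_Ioi (b := (0 : ℝ))
      (f.integrable_translate_snd w).integrableOn (f.integrable_translate_snd w).integrableOn
    rw [hf, add_eq_zero_iff_eq_neg] at hsplit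
    rw [hsplit, norm_neg]
    exact key (Set.Ioi 0) w measurableSet_Ioi fun t ht => mul_nonneg hw (le_of_lt ht)

theorem SchwartzMap.exists_pow_mul_norm_iteratedFDeriv_integral_Iic_translate_snd_le
    {f : SchwartzMap (E × ℝ) F} (hf : ∀ w, ∫ t : ℝ, f (w + (0, t)) = 0) (k n : ℕ) :
    ∃ C, ∀ w : E × ℝ, ‖w‖ ^ k *
      ‖iteratedFDeriv ℝ n (fun w => ∫ t in Set.Iic (0 : ℝ), f (w + (0, t))) w‖ ≤ C := by
  induction n generalizing F with
  | zero => simpa using exists_pow_mul_norm_integral_Iic_translate_snd_le hf k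
  | succ n ih =>
    have hfderiv : fderiv ℝ (fun w => ∫ t in Set.Iic (0 : ℝ), f (w + (0, t))) = fun w =>
        ∫ t in Set.Iic (0 : ℝ), SchwartzMap.fderivCLM ℝ (E × ℝ) F f (w + (0, t)) :=
      funext fun w => (f.hasFDerivAt_setIntegral_translate_snd _ w).fderiv
    simpa only [← norm_iteratedFDeriv_fderiv, hfderiv] using
      ih (integral_fderiv_translate_snd_eq_zero hf)

/-- The primitive, along the last coordinate, of a Schwartz function whose integral over every line
in that direction vanishes. -/
noncomputable def SchwartzMap.primitiveSnd (f : SchwartzMap (E × ℝ) F)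
    (hf : ∀ w, ∫ t : ℝ, f (w + (0, t)) = 0) : SchwartzMap (E × ℝ) F where
  toFun w := ∫ t in Set.Iic (0 : ℝ), f (w + (0, t))
  smooth' := contDiff_infty.2 fun n => f.contDiff_setIntegral_translate_snd _ n
  decay' := exists_pow_mul_norm_iteratedFDeriv_integral_Iic_translate_snd_le hf

theorem SchwartzMap.primitiveSnd_apply (f : SchwartzMap (E × ℝ) F)
    (hf : ∀ w, ∫ t : ℝ, f (w + (0, t)) = 0) (w : E × ℝ) :
    f.primitiveSnd hf w = ∫ t in Set.Iic w.2, f (w.1, t) := by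
  have h := (measurePreserving_add_left (volume : Measure ℝ) w.2).setIntegral_preimage_emb
    (measurableEmbedding_addLeft w.2) (fun t => f (w.1, t)) (Set.Iic w.2)
  rw [← h, Set.preimage_const_add_Iic, sub_self]
  change ∫ t in Set.Iic (0 : ℝ), f (w + (0, t)) = _
  congr! 3 with t
  ext <;> simp

/-- Twice the odd part of a Schwartz function in its last coordinate. -/
noncomputable def SchwartzMap.subReflectSnd (f : SchwartzMap (E × ℝ) F) : SchwartzMap (E × ℝ) F :=
  f - SchwartzMap.compCLMOfContinuousLinearEquiv ℝ
    ((ContinuousLinearEquiv.refl ℝ E).prodCongr (ContinuousLinearEquiv.neg ℝ)) f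

theorem SchwartzMap.subReflectSnd_apply (f : SchwartzMap (E × ℝ) F) (Y : E) (s : ℝ) :
    f.subReflectSnd (Y, s) = f (Y, s) - f (Y, -s) := by
  simp [subReflectSnd]

theorem SchwartzMap.integral_subReflectSnd_translate_snd (f : SchwartzMap (E × ℝ) F)
    (w : E × ℝ) : ∫ t : ℝ, f.subReflectSnd (w + (0, t)) = 0 := by
  have hshift : ∫ t : ℝ, f.subReflectSnd (w + (0, t)) = ∫ t : ℝ, f.subReflectSnd (w.1, t) := by
    rw [← integral_add_left_eq_self (fun t => f.subReflectSnd (w.1, t)) w.2]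
    congr! 3 with t
    ext <;> simp
  have hodd : ∫ t : ℝ, f.subReflectSnd (w.1, t) = -∫ t : ℝ, f.subReflectSnd (w.1, t) := by
    conv_lhs => rw [← integral_neg_eq_self]
    rw [← integral_neg]
    simp [subReflectSnd_apply]
  rw [hshift]
  rw [eq_neg_iff_add_eq_zero, ← two_smul ℝ] at hodd
  exact (smul_eq_zero.1 hodd).resolve_left two_ne_zero

end IntegralAlongSecondCoordinate

theorem hasDerivAt_integral_Iic {F : Type*} [NormedAddCommGroup F] [NormedSpace ℝ F]
    [CompleteSpace F] {g : ℝ → F} (hg : Continuous g) (hint : Integrable g) (s : ℝ) :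
    HasDerivAt (fun t => ∫ x in Set.Iic t, g x) (g s) s := by
  have h := (hg.integral_hasStrictDerivAt 0 s).hasDerivAt.const_add (∫ x in Set.Iic 0, g x)
  refine h.congr_of_eventuallyEq (.of_forall fun t => ?_)
  simp only [← intervalIntegral.integral_Iic_sub_Iic hint.integrableOn hint.integrableOn]
  abel

/-- For any Schwartz function `f` on `ℝ^{2d} × ℝ`,
`∂_s (𝒫f)(Y,s) = ½(f(Y,s) − f(Y,−s))`, and `𝒫f` is again a Schwartz function. -/
theorem Pop_deriv_and_schwartz (f : SchwartzMap ((Fin (2 * d) → ℝ) × ℝ) ℂ) :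
    (∀ (Y : Fin (2 * d) → ℝ) (s : ℝ),
      deriv (fun t => Pop (⇑f) (Y, t)) s = (1 / 2 : ℂ) * (f (Y, s) - f (Y, -s))) ∧
    (∃ g : SchwartzMap ((Fin (2 * d) → ℝ) × ℝ) ℂ, ∀ w, g w = Pop (⇑f) w) := by
  set h := f.subReflectSnd with hh
  have hP : ∀ w, Pop (⇑f) w = (1 / 2 : ℂ) * ∫ t in Set.Iic w.2, h (w.1, t) := fun w => by
    simp only [Pop, hh, SchwartzMap.subReflectSnd_apply]
  refine ⟨fun Y s => ?_,
    (1 / 2 : ℂ) • h.primitiveSnd f.integral_subReflectSnd_translate_snd, fun w => ?_⟩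
  · simp only [hP]
    rw [← SchwartzMap.subReflectSnd_apply]
    have hline : ∀ t : ℝ, h ((Y, 0) + (0, t)) = h (Y, t) := by simp
    have hcont := h.continuous_translate_snd (Y, 0)
    have hint := h.integrable_translate_snd (Y, 0)
    simp only [hline] at hcont hint
    exact ((hasDerivAt_integral_Iic hcont hint s).const_mul _).deriv
  · rw [hP, smul_apply, SchwartzMap.primitiveSnd_apply, smul_eq_mul]
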